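/- arXiv:1106.5730 — 5 statements merged into one kernel-verified Lean document; each statement's English description precedes it below -/
import Mathlib

section
/- Let c, γ, Ω, M, τ, Δ, Q be positive reals with cγ < 1, and define a∞ = (M²γ²/2)·(Ωτ·Δ^{1/2} + √(Ω²τ²Δ + Q/(cγ)))² and δ = 1 / (1 + √(1 + Q/(cγΩ²τ²Δ))). If a and a' are nonnegative reals satisfying a' ≤ (1 − cγ)·a + γ²·(√2·c·Ω·M·τ·Δ^{1/2})·a^{1/2} + (1/2)·M²γ²·Q, then a' ≤ (1 − cγ(1 − δ))·(a − a∞) + a∞. -/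
/-!
The right-hand side of the recursion is `f a`, where `f x = r x + 2 m t √x + q` with `m, t ≥ 0`
and `t ^ 2` is a fixed point of `f`. Concavity of the square root, in the form
`2 t √x ≤ x + t ^ 2`, puts `f` below its tangent at `t ^ 2`, the line of slope `r + m` through the
fixed point. Here `r = 1 - cγ`, `m = cγδ` and `t = (Mγ / √2) z`, where `z` is the larger root of
`z ^ 2 = 2 u z + Q / (cγ)` for `u = Ωτ√Δ`, and `δ = u / z`.
-/

section Linearization

variable {a m q r t : ℝ}

lemma two_mul_mul_sqrt_le_add_sq (ha : 0 ≤ a) (t : ℝ) : 2 * t * √a ≤ a + t ^ 2 := by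
  calc 2 * t * √a ≤ t ^ 2 + √a ^ 2 := two_mul_le_add_sq t √a
    _ = a + t ^ 2 := by rw [Real.sq_sqrt ha, add_comm]

lemma affine_add_mul_sqrt_le_linearization (ha : 0 ≤ a) (hm : 0 ≤ m)
    (hfix : r * t ^ 2 + 2 * m * t * t + q = t ^ 2) :
    r * a + 2 * m * t * √a + q ≤ (r + m) * (a - t ^ 2) + t ^ 2 := by
  calc r * a + 2 * m * t * √a + q
      = r * a + m * (2 * t * √a) + q := by ring
    _ ≤ r * a + m * (a + t ^ 2) + q := by gcongr; exact two_mul_mul_sqrt_le_add_sq ha t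
    _ = (r + m) * (a - t ^ 2) + t ^ 2 := by linear_combination hfix

end Linearization

section QuadraticRoot

variable {u e : ℝ}

lemma add_sqrt_sq_add_sq (h : 0 ≤ u ^ 2 + e) :
    (u + √(u ^ 2 + e)) ^ 2 = 2 * u * (u + √(u ^ 2 + e)) + e := by
  linear_combination Real.sq_sqrt h

lemma affine_add_mul_sqrt_le_of_sq_eq {a k z : ℝ} (ha : 0 ≤ a) (hk : 0 ≤ k) (hu : 0 ≤ u)
    (hz : 0 < z) (hroot : z ^ 2 = 2 * u * z + e) (v : ℝ) :
    (1 - k) * a + 2 * k * u * v * √a + k * v ^ 2 * e ≤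
      (1 - k * (1 - u / z)) * (a - (v * z) ^ 2) + (v * z) ^ 2 := by
  have hslope : u / z * z = u := div_mul_cancel₀ u hz.ne'
  have hfix : (1 - k) * (v * z) ^ 2 + 2 * (k * (u / z)) * (v * z) * (v * z) + k * v ^ 2 * e
      = (v * z) ^ 2 := by
    linear_combination 2 * k * v ^ 2 * z * hslope - k * v ^ 2 * hroot
  calc (1 - k) * a + 2 * k * u * v * √a + k * v ^ 2 * e
      = (1 - k) * a + 2 * (k * (u / z)) * (v * z) * √a + k * v ^ 2 * e := by
        linear_combination -2 * k * v * √a * hslope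
    _ ≤ (1 - k + k * (u / z)) * (a - (v * z) ^ 2) + (v * z) ^ 2 :=
        affine_add_mul_sqrt_le_linearization ha (by positivity) hfix
    _ = (1 - k * (1 - u / z)) * (a - (v * z) ^ 2) + (v * z) ^ 2 := by ring

lemma one_div_one_add_sqrt_one_add_div_sq (hu : 0 < u) (e : ℝ) :
    1 / (1 + √(1 + e / u ^ 2)) = u / (u + √(u ^ 2 + e)) := by
  have hsqrt : √(u ^ 2 + e) = u * √(1 + e / u ^ 2) := by
    calc √(u ^ 2 + e) = √(u ^ 2 * (1 + e / u ^ 2)) := by congr 1; field_simp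
      _ = u * √(1 + e / u ^ 2) := by rw [Real.sqrt_mul (sq_nonneg u), Real.sqrt_sq hu.le]
  rw [hsqrt]
  field_simp

end QuadraticRoot

theorem hogwild_linearized_recursion_general {c γ Ω τ Δ Q aInf δ a a' : ℝ} (M : ℝ)
    (hcγ : 0 < c * γ) (hΩτ : 0 < Ω * τ) (hΔ : 0 < Δ)
    (hdisc : 0 ≤ Ω ^ 2 * τ ^ 2 * Δ + Q / (c * γ))
    (haInf : aInf = M ^ 2 * γ ^ 2 / 2 * (Ω * τ * √Δ + √(Ω ^ 2 * τ ^ 2 * Δ + Q / (c * γ))) ^ 2)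
    (hδ : δ = 1 / (1 + √(1 + Q / (c * γ * Ω ^ 2 * τ ^ 2 * Δ))))
    (ha : 0 ≤ a)
    (hrec : a' ≤ (1 - c * γ) * a + γ ^ 2 * (√2 * c * Ω * M * τ * √Δ) * √a +
      1 / 2 * M ^ 2 * γ ^ 2 * Q) :
    a' ≤ (1 - c * γ * (1 - δ)) * (a - aInf) + aInf := by
  set u := Ω * τ * √Δ with hu
  have hu_pos : 0 < u := by positivity
  have hu_sq : Ω ^ 2 * τ ^ 2 * Δ = u ^ 2 := by rw [hu, mul_pow, mul_pow, Real.sq_sqrt hΔ.le]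
  have hratio : Q / (c * γ * Ω ^ 2 * τ ^ 2 * Δ) = Q / (c * γ) / u ^ 2 := by
    rw [← hu_sq, div_div]; ring
  rw [hu_sq] at hdisc haInf
  rw [hratio, one_div_one_add_sqrt_one_add_div_sq hu_pos] at hδ
  have hroot := add_sqrt_sq_add_sq hdisc
  set z := u + √(u ^ 2 + Q / (c * γ))
  set v := √2 / 2 * M * γ with hv
  have hv_sq : v ^ 2 = M ^ 2 * γ ^ 2 / 2 := by
    rw [hv]; linear_combination M ^ 2 * γ ^ 2 / 4 * Real.sq_sqrt zero_le_two
  have hQ : c * γ * (Q / (c * γ)) = Q := mul_div_cancel₀ Q hcγ.ne'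
  calc a' ≤ _ := hrec
    _ = (1 - c * γ) * a + 2 * (c * γ) * u * v * √a + c * γ * v ^ 2 * (Q / (c * γ)) := by
        rw [hu, hv_sq, hv]; linear_combination -(M ^ 2 * γ ^ 2 / 2) * hQ
    _ ≤ (1 - c * γ * (1 - u / z)) * (a - (v * z) ^ 2) + (v * z) ^ 2 :=
        affine_add_mul_sqrt_le_of_sq_eq ha hcγ.le hu_pos.le (by positivity) hroot v
    _ = (1 - c * γ * (1 - δ)) * (a - aInf) + aInf := by rw [hδ, haInf, mul_pow, hv_sq]

/-- Linearization of the one-step Hogwild! recursion about its fixed point: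
if `a' ≤ (1 − cγ)a + γ²(√2·cΩMτ√Δ)√a + ½M²γ²Q` for nonnegative reals `a, a'`,
then `a' ≤ (1 − cγ(1 − δ))(a − a∞) + a∞`, where
`a∞ = (M²γ²/2)(Ωτ√Δ + √(Ω²τ²Δ + Q/(cγ)))²` and
`δ = 1/(1 + √(1 + Q/(cγΩ²τ²Δ)))`. -/
theorem hogwild_linearized_recursion
    (c γ Ω M τ Δ Q : ℝ) (hc : 0 < c) (hγ : 0 < γ) (hΩ : 0 < Ω) (hM : 0 < M)
    (hτ : 0 < τ) (hΔ : 0 < Δ) (hQ : 0 < Q) (hcγ : c * γ < 1)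
    (aInf δ : ℝ)
    (haInf : aInf = M ^ 2 * γ ^ 2 / 2 *
      (Ω * τ * Real.sqrt Δ + Real.sqrt (Ω ^ 2 * τ ^ 2 * Δ + Q / (c * γ))) ^ 2)
    (hδ : δ = 1 / (1 + Real.sqrt (1 + Q / (c * γ * Ω ^ 2 * τ ^ 2 * Δ))))
    (a a' : ℝ) (ha : 0 ≤ a) (ha' : 0 ≤ a')
    (hrec : a' ≤ (1 - c * γ) * a +
      γ ^ 2 * (Real.sqrt 2 * c * Ω * M * τ * Real.sqrt Δ) * Real.sqrt a +
      1 / 2 * M ^ 2 * γ ^ 2 * Q) :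
    a' ≤ (1 - c * γ * (1 - δ)) * (a - aInf) + aInf := by
  exact hogwild_linearized_recursion_general M (mul_pos hc hγ) (mul_pos hΩ hτ) hΔ (by positivity)
    haInf hδ ha hrec
end

section
/- Let c_r, B, ε > 0, ϑ ∈ (0,1], and set γ = ϑε/(2B); assume c_rγ < 1. Let a∞ be a real number with 0 ≤ a∞ ≤ γB, and let (a_k)_{k≥0} be a nonnegative sequence with 2a₀ ≥ ε satisfying a_{k+1} ≤ (1 − c_rγ)(a_k − a∞) + a∞ for all k. Then for every integer k ≥ 2B·log(2a₀/ε)/(ϑεc_r), we have a_k ≤ ε. -/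
/-!
The excess `u n - L` over the limiting error contracts by the factor `1 - c` at each step, so
`u n` is at most a convex combination of `u 0` and `L` with weight `(1 - c) ^ n` on `u 0`. Since
`1 - c ≤ exp (-c)`, the contribution of `u 0` drops below `δ` after `log (u 0 / δ) / c` steps. For
SGD, `c = c_r γ` and the target accuracy `ε` is split evenly: `δ = ε / 2` for the initial error,
and `a∞ ≤ γ B = ϑ ε / 2` for the limiting one.
-/

section AffineRecursion

variable {c : ℝ}

lemma one_sub_pow_le_exp_neg_mul (hc : c ≤ 1) (n : ℕ) :
    (1 - c) ^ n ≤ Real.exp (-(n * c)) :=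
  calc (1 - c) ^ n ≤ Real.exp (-c) ^ n :=
        pow_le_pow_left₀ (sub_nonneg.2 hc) (Real.one_sub_le_exp_neg c) n
    _ = Real.exp (-(n * c)) := by rw [← Real.exp_nat_mul, mul_neg]

lemma one_sub_pow_mul_le_of_log_div_le {x δ : ℝ} {n : ℕ} (hc₀ : 0 < c) (hc₁ : c ≤ 1) (hδ : 0 < δ)
    (hn : Real.log (x / δ) / c ≤ n) : (1 - c) ^ n * x ≤ δ := by
  rcases le_or_gt x 0 with hx | hx
  · exact (mul_nonpos_of_nonneg_of_nonpos (pow_nonneg (sub_nonneg.2 hc₁) n) hx).trans hδ.le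
  · have hlog : Real.log (x / δ) ≤ n * c := (div_le_iff₀ hc₀).1 hn
    calc (1 - c) ^ n * x ≤ Real.exp (-(n * c)) * x := by
          gcongr
          exact one_sub_pow_le_exp_neg_mul hc₁ n
      _ ≤ Real.exp (-Real.log (x / δ)) * x := by gcongr
      _ = δ := by
          rw [Real.exp_neg, Real.exp_log (div_pos hx hδ), inv_div, div_mul_cancel₀ δ hx.ne']

variable {u : ℕ → ℝ} {L : ℝ}

lemma sub_le_pow_mul_sub_of_succ_le {q : ℝ} (hq : 0 ≤ q)
    (hu : ∀ k, u (k + 1) ≤ q * (u k - L) + L) (n : ℕ) : u n - L ≤ q ^ n * (u 0 - L) :=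
  le_geom (u := fun k ↦ u k - L) hq n fun k _ ↦ sub_le_iff_le_add.2 (hu k)

lemma le_add_of_succ_le_of_log_div_le {M δ : ℝ} {n : ℕ} (hc₀ : 0 < c) (hc₁ : c ≤ 1) (hδ : 0 < δ)
    (hM : 0 ≤ M) (hLM : L ≤ M) (hu : ∀ k, u (k + 1) ≤ (1 - c) * (u k - L) + L)
    (hn : Real.log (u 0 / δ) / c ≤ n) : u n ≤ δ + M := by
  have hq₀ : 0 ≤ 1 - c := sub_nonneg.2 hc₁
  have hpow₀ : 0 ≤ (1 - c) ^ n := pow_nonneg hq₀ n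
  have hpow₁ : (1 - c) ^ n ≤ 1 := pow_le_one₀ hq₀ (sub_le_self 1 hc₀.le)
  calc u n ≤ (1 - c) ^ n * u 0 + (1 - (1 - c) ^ n) * L := by
        linarith [sub_le_pow_mul_sub_of_succ_le hq₀ hu n]
    _ ≤ δ + (1 - (1 - c) ^ n) * M :=
        add_le_add (one_sub_pow_mul_le_of_log_div_le hc₀ hc₁ hδ hn)
          (mul_le_mul_of_nonneg_left hLM (sub_nonneg.2 hpow₁))
    _ ≤ δ + M := by
        gcongr
        exact mul_le_of_le_one_left hM (sub_le_self 1 hpow₀)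

end AffineRecursion

theorem sgd_constant_stepsize_epsilon_general
    {cr B ε ϑ γ aInf : ℝ} {a : ℕ → ℝ} (hcr : 0 < cr) (hB : 0 < B) (hε : 0 < ε)
    (hϑ : ϑ ∈ Set.Ioc (0 : ℝ) 1) (hγ : γ = ϑ * ε / (2 * B)) (hcγ : cr * γ ≤ 1)
    (haInf : aInf ≤ γ * B)
    (hrec : ∀ k : ℕ, a (k + 1) ≤ (1 - cr * γ) * (a k - aInf) + aInf) {k : ℕ}
    (hk : 2 * B * Real.log (2 * a 0 / ε) / (ϑ * ε * cr) ≤ k) : a k ≤ ε := by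
  obtain ⟨hϑ₀, hϑ₁⟩ := hϑ
  have hγ₀ : 0 < γ := by rw [hγ]; positivity
  have hγB : γ * B = ϑ * ε / 2 := by rw [hγ]; field_simp
  have hthreshold : Real.log (a 0 / (ε / 2)) / (cr * γ) =
      2 * B * Real.log (2 * a 0 / ε) / (ϑ * ε * cr) := by
    rw [hγ, div_div_eq_mul_div, mul_comm (a 0)]
    field_simp
  calc a k ≤ ε / 2 + γ * B :=
        le_add_of_succ_le_of_log_div_le (mul_pos hcr hγ₀) hcγ (half_pos hε) (mul_pos hγ₀ hB).le haInf
          hrec (hthreshold.trans_le hk)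
    _ = ε / 2 + ϑ * ε / 2 := by rw [hγB]
    _ ≤ ε := by linarith [mul_le_of_le_one_left hε.le hϑ₁]

/-- Constant-stepsize SGD with `γ = ϑε/(2B)`: if `a∞ ≤ γB` and the linearized recursion
`a_{k+1} ≤ (1 − c_rγ)(a_k − a∞) + a∞` holds, then after
`k ≥ 2B·log(2a₀/ε)/(ϑεc_r)` iterations we have `a_k ≤ ε`. -/
theorem sgd_constant_stepsize_epsilon
    (cr B ε ϑ γ : ℝ) (hcr : 0 < cr) (hB : 0 < B) (hε : 0 < ε)
    (hϑ : ϑ ∈ Set.Ioc (0 : ℝ) 1) (hγ : γ = ϑ * ε / (2 * B)) (hcγ : cr * γ < 1)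
    (aInf : ℝ) (haInf0 : 0 ≤ aInf) (haInf : aInf ≤ γ * B)
    (a : ℕ → ℝ) (hapos : ∀ k, 0 ≤ a k) (ha0 : ε ≤ 2 * a 0)
    (hrec : ∀ k : ℕ, a (k + 1) ≤ (1 - cr * γ) * (a k - aInf) + aInf) :
    ∀ k : ℕ, 2 * B * Real.log (2 * a 0 / ε) / (ϑ * ε * cr) ≤ (k : ℝ) → a k ≤ ε :=
  fun _ hk ↦ sgd_constant_stepsize_epsilon_general hcr hB hε hϑ hγ hcγ.le haInf hrec hk
end

section
/- Let c_r, B > 0, β ∈ (0,1), ϑ ∈ (0,1), and a₀ ≥ ϑB/c_r. There exists a sequence of stepsizes (γ_j)_{j≥0} with 0 < γ_j ≤ ϑ/c_r for all j (depending only on c_r, B, β, ϑ, a₀) such that: for every nonnegative sequence (a_j)_{j≥0} starting at a₀ and satisfying a_{j+1} ≤ (1 − c_rγ_j)(a_j − γ_jB) + γ_jB for all j, and for every ε ∈ (0, a₀], if k is an integer with k ≥ ϑ^{−1}·log(a₀c_r/(ϑB)) + (2B/(c_rε))·log(2/β)/(1 − β), then a_k ≤ ε. -/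
/-!
After normalising the stepsizes as `s_j = c_r γ_j` and putting `M = B / c_r`, the recursion reads
`a_{j+1} ≤ (1 - s_j) a_j + s_j² M`. With the constant step `ϑ` the excess over `ϑ M` contracts by
`1 - ϑ`, so about `ϑ⁻¹ log (a₀ / (ϑ M))` iterations reach the level `2 ϑ M`. From there on the steps
decay harmonically, `s = 2 / t` with `t` growing by one per iteration, and the bound `4 M / t` is
preserved. The iteration count `4 B / (c_r ε)` obtained in this way is at most the claimed one
because `log (2 / β) / (1 - β) ≥ 2`.

Harmonic steps are used instead of a geometric backoff because the bound is asked for every `ε`: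
when `β` is small, the iterates of a backoff schedule can lag behind the `1 / k` curve in the middle
of an epoch.
-/

/-- The normalised stepsizes `c_r γ_j`: constantly `ϑ` for the first `m` iterations, then harmonic
decay. The truncated subtraction `j - m` makes one formula cover both phases. -/
noncomputable def warmupHarmonicStep (ϑ : ℝ) (m j : ℕ) : ℝ :=
  2 / (((j - m : ℕ) : ℝ) + 2 / ϑ)

lemma warmupHarmonicStep_of_le (ϑ : ℝ) {m j : ℕ} (hj : j ≤ m) : warmupHarmonicStep ϑ m j = ϑ := by
  simp [warmupHarmonicStep, Nat.sub_eq_zero_of_le hj, div_div_cancel₀]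

lemma warmupHarmonicStep_add (ϑ : ℝ) (m i : ℕ) :
    warmupHarmonicStep ϑ m (m + i) = 2 / (i + 2 / ϑ) := by
  simp only [warmupHarmonicStep, Nat.add_sub_cancel_left]

lemma warmupHarmonicStep_pos {ϑ : ℝ} (hϑ : 0 < ϑ) (m j : ℕ) : 0 < warmupHarmonicStep ϑ m j := by
  unfold warmupHarmonicStep
  positivity

lemma warmupHarmonicStep_le {ϑ : ℝ} (hϑ : 0 < ϑ) (m j : ℕ) : warmupHarmonicStep ϑ m j ≤ ϑ :=
  calc 2 / (((j - m : ℕ) : ℝ) + 2 / ϑ)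
    _ ≤ 2 / (2 / ϑ) := by gcongr; exact le_add_of_nonneg_left (Nat.cast_nonneg _)
    _ = ϑ := div_div_cancel₀ two_ne_zero

lemma sub_le_pow_mul_sub_of_le_affine {x : ℕ → ℝ} {q c : ℝ} (hq : 0 ≤ q) (n : ℕ)
    (hx : ∀ j < n, x (j + 1) ≤ q * x j + (1 - q) * c) : x n - c ≤ q ^ n * (x 0 - c) :=
  le_geom (u := fun j ↦ x j - c) hq n fun j hj ↦ by linarith [hx j hj]

lemma one_sub_pow_mul_le_of_log_le {s r y : ℝ} {n : ℕ} (hs : s ≤ 1) (hr : 0 < r) (hy : 0 < y)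
    (hn : Real.log (y / r) ≤ n * s) : (1 - s) ^ n * y ≤ r :=
  calc (1 - s) ^ n * y
    _ ≤ Real.exp (-s) ^ n * y := by
      have : 0 ≤ 1 - s := sub_nonneg.2 hs
      gcongr
      exact Real.one_sub_le_exp_neg s
    _ = Real.exp (-(n * s)) * y := by rw [← Real.exp_nat_mul, mul_neg]
    _ ≤ Real.exp (-Real.log (y / r)) * y := by gcongr
    _ = r := by rw [Real.exp_neg, Real.exp_log (div_pos hy hr), inv_div, div_mul_cancel₀ r hy.ne']

lemma le_two_mul_of_constant_step {x : ℕ → ℝ} {s M : ℝ} {n : ℕ} (hs₀ : 0 < s) (hs₁ : s ≤ 1)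
    (hM : 0 < M) (hx₀ : 0 < x 0) (hn : s⁻¹ * Real.log (x 0 / (s * M)) ≤ n)
    (hx : ∀ j < n, x (j + 1) ≤ (1 - s) * x j + s ^ 2 * M) : x n ≤ 2 * s * M := by
  have hq : 0 ≤ 1 - s := sub_nonneg.2 hs₁
  have hsM : 0 < s * M := mul_pos hs₀ hM
  have contraction : x n - s * M ≤ (1 - s) ^ n * (x 0 - s * M) :=
    sub_le_pow_mul_sub_of_le_affine hq n fun j hj ↦ (hx j hj).trans_eq (by ring)
  have small : (1 - s) ^ n * x 0 ≤ s * M :=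
    one_sub_pow_mul_le_of_log_le hs₁ hsM hx₀ ((inv_mul_le_iff₀' hs₀).1 hn)
  have : 0 ≤ (1 - s) ^ n * (s * M) := by positivity
  linarith

lemma harmonic_step_le {t M : ℝ} (ht : 0 < t) (hM : 0 ≤ M) :
    (1 - 2 / t) * (4 * M / t) + (2 / t) ^ 2 * M ≤ 4 * M / (t + 1) := by
  have gap : 4 * M / (t + 1) - ((1 - 2 / t) * (4 * M / t) + (2 / t) ^ 2 * M) =
      4 * M / (t ^ 2 * (t + 1)) := by
    field_simp
    ring
  have : 0 ≤ 4 * M / (t ^ 2 * (t + 1)) := by positivity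
  linarith

lemma le_div_add_of_harmonic_step {x : ℕ → ℝ} {t M : ℝ} (ht : 2 ≤ t) (hM : 0 ≤ M)
    (hx₀ : x 0 ≤ 4 * M / t)
    (hx : ∀ i : ℕ, x (i + 1) ≤ (1 - 2 / (i + t)) * x i + (2 / (i + t)) ^ 2 * M) (i : ℕ) :
    x i ≤ 4 * M / (i + t) := by
  induction i with
  | zero => simpa using hx₀
  | succ i ih =>
    have hit : 2 ≤ i + t := ht.trans (le_add_of_nonneg_left i.cast_nonneg)
    have hit₀ : 0 < i + t := two_pos.trans_le hit
    have hq : 0 ≤ 1 - 2 / (i + t) := sub_nonneg.2 ((div_le_one hit₀).2 hit)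
    calc x (i + 1)
      _ ≤ (1 - 2 / (i + t)) * x i + (2 / (i + t)) ^ 2 * M := hx i
      _ ≤ (1 - 2 / (i + t)) * (4 * M / (i + t)) + (2 / (i + t)) ^ 2 * M := by gcongr
      _ ≤ 4 * M / (i + t + 1) := harmonic_step_le hit₀ hM
      _ = 4 * M / ((i + 1 : ℕ) + t) := by rw [Nat.cast_add_one, add_right_comm]

lemma le_div_add_of_warmupHarmonicStep {x : ℕ → ℝ} {ϑ M : ℝ} {m : ℕ} (hϑ₀ : 0 < ϑ) (hϑ₁ : ϑ ≤ 1)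
    (hM : 0 < M) (hx₀ : 0 < x 0) (hm : ϑ⁻¹ * Real.log (x 0 / (ϑ * M)) ≤ m)
    (hx : ∀ j, x (j + 1) ≤
      (1 - warmupHarmonicStep ϑ m j) * x j + warmupHarmonicStep ϑ m j ^ 2 * M) (i : ℕ) :
    x (m + i) ≤ 4 * M / (i + 2 / ϑ) := by
  have warmup : x m ≤ 2 * ϑ * M := le_two_mul_of_constant_step hϑ₀ hϑ₁ hM hx₀ hm fun j hj ↦ by
    simpa only [warmupHarmonicStep_of_le ϑ hj.le] using hx j
  refine le_div_add_of_harmonic_step (x := fun i ↦ x (m + i)) ?_ hM.le ?_ (fun i ↦ ?_) i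
  · exact (le_div_iff₀ hϑ₀).2 (by linarith)
  · exact warmup.trans_eq (by field_simp; norm_num)
  · simpa only [warmupHarmonicStep_add, add_assoc] using hx (m + i)

lemma two_le_log_two_div_div_one_sub {β : ℝ} (hβ₀ : 0 < β) (hβ₁ : β < 1) :
    2 ≤ Real.log (2 / β) / (1 - β) := by
  have hlog : Real.log (2 / β) = 2 * Real.log 2 - Real.log (2 * β) := by
    rw [Real.log_div two_ne_zero hβ₀.ne', Real.log_mul two_ne_zero hβ₀.ne']
    ring
  rw [le_div_iff₀ (sub_pos.2 hβ₁), hlog]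
  linarith [Real.log_two_gt_d9, Real.log_le_sub_one_of_pos (mul_pos two_pos hβ₀)]

lemma contraction_bound_eq_normalised {cr : ℝ} (hcr : cr ≠ 0) (a B s : ℝ) :
    (1 - cr * (s / cr)) * (a - s / cr * B) + s / cr * B = (1 - s) * a + s ^ 2 * (B / cr) := by
  field_simp
  ring

theorem backoff_scheme_one_over_k_rate_general
    {cr B ϑ a0 : ℝ} (hcr : 0 < cr) (hB : 0 < B) (hϑ : ϑ ∈ Set.Ioc (0 : ℝ) 1)
    (ha0 : ϑ * B / cr ≤ a0) :
    ∃ γ : ℕ → ℝ, (∀ j, 0 < γ j ∧ γ j ≤ ϑ / cr) ∧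
      ∀ a : ℕ → ℝ, a 0 = a0 →
        (∀ j : ℕ, a (j + 1) ≤ (1 - cr * γ j) * (a j - γ j * B) + γ j * B) →
        ∀ ε : ℝ, 0 < ε → ∀ k : ℕ,
          ϑ⁻¹ * Real.log (a0 * cr / (ϑ * B)) + 4 * B / (cr * ε) ≤ (k : ℝ) → a k ≤ ε := by
  obtain ⟨hϑ₀, hϑ₁⟩ := hϑ
  have hM : 0 < B / cr := div_pos hB hcr
  have ha0_pos : 0 < a0 := lt_of_lt_of_le (by positivity) ha0
  set L := ϑ⁻¹ * Real.log (a0 * cr / (ϑ * B))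
  have hL₀ : 0 ≤ L := by
    have : 1 ≤ a0 * cr / (ϑ * B) := (one_le_div (by positivity)).2 ((div_le_iff₀ hcr).1 ha0)
    exact mul_nonneg (inv_pos.2 hϑ₀).le (Real.log_nonneg this)
  refine ⟨fun j ↦ warmupHarmonicStep ϑ ⌈L⌉₊ j / cr,
    fun j ↦ ⟨div_pos (warmupHarmonicStep_pos hϑ₀ _ j) hcr,
      div_le_div_of_nonneg_right (warmupHarmonicStep_le hϑ₀ _ j) hcr.le⟩, ?_⟩
  rintro a rfl ha ε hε k hk
  have hrate : 0 < 4 * B / (cr * ε) := by positivity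
  obtain ⟨i, rfl⟩ := Nat.exists_eq_add_of_le (Nat.ceil_le.2 (by linarith) : ⌈L⌉₊ ≤ k)
  have hwarmup : ϑ⁻¹ * Real.log (a 0 / (ϑ * (B / cr))) ≤ ⌈L⌉₊ := by
    rw [← mul_div_assoc, div_div_eq_mul_div]
    exact Nat.le_ceil L
  -- The offset `2 / ϑ` of the harmonic phase absorbs the rounding error of `⌈L⌉₊`.
  have helapsed : 4 * B / (cr * ε) ≤ i + 2 / ϑ := by
    have : 1 ≤ 2 / ϑ := (one_le_div hϑ₀).2 (by linarith)
    push_cast at hk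
    linarith [Nat.ceil_lt_add_one hL₀]
  calc a (⌈L⌉₊ + i)
    _ ≤ 4 * (B / cr) / (i + 2 / ϑ) := le_div_add_of_warmupHarmonicStep hϑ₀ hϑ₁ hM ha0_pos hwarmup
      (fun j ↦ (ha j).trans_eq (contraction_bound_eq_normalised hcr.ne' _ B _)) i
    _ ≤ 4 * (B / cr) / (4 * B / (cr * ε)) := by gcongr
    _ = ε := by field_simp

/-- The piecewise-constant backoff stepsize protocol achieves a `1/k` convergence rate:
there is a sequence of stepsizes `γ_j ≤ ϑ/c_r` such that every nonnegative sequence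
starting at `a₀` and satisfying the per-step contraction
`a_{j+1} ≤ (1 − c_rγ_j)(a_j − γ_jB) + γ_jB` reaches accuracy `ε` after
`ϑ⁻¹log(a₀c_r/(ϑB)) + (2B/(c_rε))·log(2/β)/(1 − β)` iterations, for every `ε ∈ (0, a₀]`. -/
theorem backoff_scheme_one_over_k_rate
    (cr B β ϑ a0 : ℝ) (hcr : 0 < cr) (hB : 0 < B)
    (hβ : β ∈ Set.Ioo (0 : ℝ) 1) (hϑ : ϑ ∈ Set.Ioo (0 : ℝ) 1)
    (ha0 : ϑ * B / cr ≤ a0) :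
    ∃ γ : ℕ → ℝ, (∀ j, 0 < γ j ∧ γ j ≤ ϑ / cr) ∧
      ∀ a : ℕ → ℝ, (∀ j, 0 ≤ a j) → a 0 = a0 →
        (∀ j : ℕ, a (j + 1) ≤ (1 - cr * γ j) * (a j - γ j * B) + γ j * B) →
        ∀ ε : ℝ, ε ∈ Set.Ioc (0 : ℝ) a0 →
          ∀ k : ℕ,
            ϑ⁻¹ * Real.log (a0 * cr / (ϑ * B)) +
              2 * B / (cr * ε) * (Real.log (2 / β) / (1 - β)) ≤ (k : ℝ) →
            a k ≤ ε := by
  obtain ⟨γ, hγ, hrate⟩ := backoff_scheme_one_over_k_rate_general hcr hB ⟨hϑ.1, hϑ.2.le⟩ ha0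
  refine ⟨γ, hγ, fun a _ ha₀ ha ε hε k hk ↦ hrate a ha₀ ha ε hε.1 k (le_trans ?_ hk)⟩
  have hq : 0 ≤ 2 * B / (cr * ε) := div_nonneg (by positivity) (mul_pos hcr hε.1).le
  rw [show 4 * B / (cr * ε) = 2 * B / (cr * ε) * 2 by ring]
  gcongr
  exact two_le_log_two_div_div_one_sub hβ.1 hβ.2
end

section
/- Let c, M > 0, β ∈ (0,1), ϑ ∈ (0,1), and let D₀ > 0 satisfy 4D₀c² ≥ ϑM². There exists a sequence of stepsizes (γ_k)_{k≥0} with 0 < γ_k ≤ ϑ/(2c) for all k such that every nonnegative sequence (a_k)_{k≥0} with a₀ = D₀/2 and a_{k+1} ≤ (1 − 2cγ_k)·a_k + (1/2)·γ_k²·M² for all k satisfies, for every integer k > ϑ^{−1}·log(4D₀c²/(ϑM²)), a_k ≤ (log(2/β)/(4(1 − β)))·(M²/c²)·1/(k − ϑ^{−1}·log(4D₀c²/(ϑM²))). -/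
/-! With `u = (4c²/M²) a` and `η = 2cγ` the recursion becomes `u_{k+1} ≤ (1 - η_k) u_k + η_k² / 2`.
Its right-hand side is smallest over `η ≤ ϑ` at the greedy choice `η_k = min ϑ u_k`. Being optimal,
the greedy step is at least as good as the constant step `ϑ`, which contracts `u - ϑ/2` by the
factor `1 - ϑ ≤ exp (-ϑ)`; hence `u_k ≤ ϑ` as soon as `k ≥ t₀ = ϑ⁻¹ log (2u₀/ϑ)`. From then on
`u_{k+1} = u_k (1 - u_k / 2)`, which preserves `u_k (k - t₀) ≤ 2`. The resulting constant `1/2` is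
below `log (2/β) / (4 (1 - β))` for `0 < β < 1`, by the tangent line of `log` at `1/2`.
-/

open Real

/-- The normalised one-step error bound of stochastic gradient descent: the bound `u` on the error
becomes `sgdUpdate η u` after a step of size `η`, in units where `2c = 1` and `M² / (4c²) = 1`. -/
noncomputable def sgdUpdate (η u : ℝ) : ℝ :=
  (1 - η) * u + η ^ 2 / 2

/-- The error bounds obtained from `u₀` when every step size minimises `sgdUpdate` subject to the
cap `ϑ`. -/
noncomputable def greedyBound (ϑ u₀ : ℝ) : ℕ → ℝ
  | 0 => u₀
  | k + 1 => sgdUpdate (min ϑ (greedyBound ϑ u₀ k)) (greedyBound ϑ u₀ k)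

/-- The time, as a real number, after which the error bound started at `u₀` has dropped to the
cap `ϑ`. It is negative when `u₀ < ϑ / 2`. -/
noncomputable def burnInTime (ϑ u₀ : ℝ) : ℝ :=
  ϑ⁻¹ * log (2 * u₀ / ϑ)

section Update

variable {ϑ η u : ℝ}

theorem sgdUpdate_eq_add_sq (η u : ℝ) : sgdUpdate η u = u - u ^ 2 / 2 + (u - η) ^ 2 / 2 := by
  rw [sgdUpdate]; ring

theorem sgdUpdate_self (u : ℝ) : sgdUpdate u u = u * (1 - u / 2) := by
  rw [sgdUpdate]; ring

theorem sgdUpdate_sub_half (η u : ℝ) : sgdUpdate η u - η / 2 = (1 - η) * (u - η / 2) := by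
  rw [sgdUpdate]; ring

theorem sgdUpdate_pos (hη : 0 < η) (hη1 : η ≤ 1) (hu : 0 ≤ u) : 0 < sgdUpdate η u := by
  have : 0 ≤ 1 - η := sub_nonneg.2 hη1
  rw [sgdUpdate]; positivity

theorem sgdUpdate_min_le (h : η ≤ ϑ) : sgdUpdate (min ϑ u) u ≤ sgdUpdate η u := by
  simp only [sgdUpdate_eq_add_sq]
  rcases le_total u ϑ with hu | hu
  · rw [min_eq_right hu, sub_self]
    linarith [sq_nonneg (u - η)]
  · rw [min_eq_left hu]
    have : 0 ≤ u - ϑ := sub_nonneg.2 hu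
    gcongr

end Update

section GreedyBound

variable {ϑ u₀ : ℝ}

theorem greedyBound_pos (hϑ : 0 < ϑ) (hϑ1 : ϑ ≤ 1) (hu₀ : 0 < u₀) (k : ℕ) :
    0 < greedyBound ϑ u₀ k := by
  induction k with
  | zero => exact hu₀
  | succ k ih => exact sgdUpdate_pos (lt_min hϑ ih) (min_le_of_left_le hϑ1) ih.le

theorem greedyBound_sub_half_le_pow_mul (hϑ1 : ϑ ≤ 1) (k : ℕ) :
    greedyBound ϑ u₀ k - ϑ / 2 ≤ (1 - ϑ) ^ k * (u₀ - ϑ / 2) := by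
  induction k with
  | zero => simp [greedyBound]
  | succ k ih =>
    calc greedyBound ϑ u₀ (k + 1) - ϑ / 2
        ≤ sgdUpdate ϑ (greedyBound ϑ u₀ k) - ϑ / 2 := sub_le_sub_right (sgdUpdate_min_le le_rfl) _
      _ = (1 - ϑ) * (greedyBound ϑ u₀ k - ϑ / 2) := sgdUpdate_sub_half _ _
      _ ≤ (1 - ϑ) * ((1 - ϑ) ^ k * (u₀ - ϑ / 2)) :=
          mul_le_mul_of_nonneg_left ih (sub_nonneg.2 hϑ1)
      _ = (1 - ϑ) ^ (k + 1) * (u₀ - ϑ / 2) := by ring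

theorem exp_neg_mul_mul_le_half_of_burnInTime_le (hϑ : 0 < ϑ) (hu₀ : 0 < u₀) {t : ℝ}
    (ht : burnInTime ϑ u₀ ≤ t) : exp (-(ϑ * t)) * u₀ ≤ ϑ / 2 := by
  have hlog : log (2 * u₀ / ϑ) ≤ ϑ * t := (inv_mul_le_iff₀ hϑ).1 ht
  have hexp : 2 * u₀ / ϑ ≤ exp (ϑ * t) := (log_le_iff_le_exp (by positivity)).1 hlog
  rw [exp_neg, inv_mul_le_iff₀ (exp_pos _)]
  linarith [(div_le_iff₀ hϑ).1 hexp]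

theorem greedyBound_le_of_burnInTime_le (hϑ : 0 < ϑ) (hϑ1 : ϑ ≤ 1) (hu₀ : 0 < u₀) {k : ℕ}
    (hk : burnInTime ϑ u₀ ≤ k) : greedyBound ϑ u₀ k ≤ ϑ := by
  have : 0 ≤ 1 - ϑ := sub_nonneg.2 hϑ1
  suffices greedyBound ϑ u₀ k - ϑ / 2 ≤ ϑ / 2 by linarith
  calc greedyBound ϑ u₀ k - ϑ / 2
      ≤ (1 - ϑ) ^ k * (u₀ - ϑ / 2) := greedyBound_sub_half_le_pow_mul hϑ1 k
    _ ≤ (1 - ϑ) ^ k * u₀ := by gcongr; linarith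
    _ ≤ exp (-ϑ) ^ k * u₀ := by gcongr; exact one_sub_le_exp_neg ϑ
    _ = exp (-(ϑ * k)) * u₀ := by rw [← exp_nat_mul]; ring_nf
    _ ≤ ϑ / 2 := exp_neg_mul_mul_le_half_of_burnInTime_le hϑ hu₀ hk

theorem neg_half_le_mul_burnInTime (hϑ : 0 < ϑ) (hu₀ : 0 < u₀) :
    -(1 / 2) ≤ u₀ * burnInTime ϑ u₀ := by
  have hlog : 1 - (2 * u₀ / ϑ)⁻¹ ≤ log (2 * u₀ / ϑ) := one_sub_inv_le_log_of_pos (by positivity)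
  calc -(1 / 2) ≤ u₀ * ϑ⁻¹ - 1 / 2 := by linarith [mul_pos hu₀ (inv_pos.2 hϑ)]
    _ = u₀ * (ϑ⁻¹ * (1 - (2 * u₀ / ϑ)⁻¹)) := by field_simp
    _ ≤ u₀ * burnInTime ϑ u₀ := by rw [burnInTime]; gcongr

theorem mul_one_sub_half_mul_add_one_le_two {u t : ℝ} (hu : u ≤ 2) (h : u * t ≤ 2) :
    u * (1 - u / 2) * (t + 1) ≤ 2 := by
  have hfactor : 0 ≤ 1 - u / 2 := by linarith
  calc u * (1 - u / 2) * (t + 1) = (1 - u / 2) * (u * t + u) := by ring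
    _ ≤ (1 - u / 2) * (2 + u) := by gcongr
    _ ≤ 2 := by linarith [sq_nonneg u]

theorem greedyBound_mul_sub_burnInTime_le_two (hϑ : 0 < ϑ) (hϑ1 : ϑ ≤ 1) (hu₀ : 0 < u₀) (k : ℕ) :
    greedyBound ϑ u₀ k * (k - burnInTime ϑ u₀) ≤ 2 := by
  induction k with
  | zero =>
    rw [greedyBound, Nat.cast_zero]
    linarith [neg_half_le_mul_burnInTime hϑ hu₀]
  | succ k ih =>
    rcases le_or_gt (burnInTime ϑ u₀) k with hk | hk
    · have hle : greedyBound ϑ u₀ k ≤ ϑ := greedyBound_le_of_burnInTime_le hϑ hϑ1 hu₀ hk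
      rw [greedyBound, min_eq_right hle, sgdUpdate_self, Nat.cast_succ, add_sub_right_comm]
      exact mul_one_sub_half_mul_add_one_le_two (by linarith) ih
    · have hpos : 0 < greedyBound ϑ u₀ (k + 1) := greedyBound_pos hϑ hϑ1 hu₀ (k + 1)
      have htime : ((k + 1 : ℕ) : ℝ) - burnInTime ϑ u₀ ≤ 1 := by push_cast; linarith
      rcases le_total (burnInTime ϑ u₀) (k + 1 : ℕ) with hk' | hk'
      · have hle : greedyBound ϑ u₀ (k + 1) ≤ ϑ := greedyBound_le_of_burnInTime_le hϑ hϑ1 hu₀ hk'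
        linarith [mul_le_of_le_one_right hpos.le htime]
      · linarith [mul_nonpos_of_nonneg_of_nonpos hpos.le (sub_nonpos.2 hk')]

theorem le_mul_greedyBound {a : ℕ → ℝ} {s : ℝ} (hϑ1 : ϑ ≤ 1) (h₀ : a 0 ≤ s * u₀)
    (ha : ∀ k, a (k + 1) ≤ (1 - min ϑ (greedyBound ϑ u₀ k)) * a k
      + s * (min ϑ (greedyBound ϑ u₀ k) ^ 2 / 2)) (k : ℕ) :
    a k ≤ s * greedyBound ϑ u₀ k := by
  induction k with
  | zero => exact h₀
  | succ k ih =>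
    have hη : 0 ≤ 1 - min ϑ (greedyBound ϑ u₀ k) := sub_nonneg.2 (min_le_of_left_le hϑ1)
    calc a (k + 1)
        ≤ (1 - min ϑ (greedyBound ϑ u₀ k)) * (s * greedyBound ϑ u₀ k)
          + s * (min ϑ (greedyBound ϑ u₀ k) ^ 2 / 2) := (ha k).trans (by gcongr)
      _ = s * greedyBound ϑ u₀ (k + 1) := by rw [greedyBound, sgdUpdate]; ring

end GreedyBound

theorem two_mul_one_sub_le_log_two_div {β : ℝ} (hβ : 0 < β) : 2 * (1 - β) ≤ log (2 / β) := by
  have htangent : log (2 * β) ≤ 2 * β - 1 := log_le_sub_one_of_pos (by positivity)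
  rw [log_mul two_ne_zero hβ.ne'] at htangent
  rw [log_div two_ne_zero hβ.ne']
  linarith [one_sub_inv_le_log_of_pos (zero_lt_two (α := ℝ))]

theorem half_le_log_two_div_div {β : ℝ} (hβ : β ∈ Set.Ioo (0 : ℝ) 1) :
    1 / 2 ≤ log (2 / β) / (4 * (1 - β)) := by
  rw [le_div_iff₀ (by linarith [hβ.2])]
  linarith [two_mul_one_sub_le_log_two_div hβ.1]

theorem serial_sgd_backoff_rate_general
    (c M ϑ D0 : ℝ) (hc : 0 < c) (hM : 0 < M) (hϑ : ϑ ∈ Set.Ioc (0 : ℝ) 1) (hD0 : 0 < D0) :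
    ∃ γ : ℕ → ℝ, (∀ k, 0 < γ k ∧ γ k ≤ ϑ / (2 * c)) ∧
      ∀ a : ℕ → ℝ, a 0 ≤ D0 / 2 →
        (∀ k : ℕ, a (k + 1) ≤ (1 - 2 * c * γ k) * a k + 1 / 2 * (γ k) ^ 2 * M ^ 2) →
        ∀ k : ℕ, ϑ⁻¹ * log (4 * D0 * c ^ 2 / (ϑ * M ^ 2)) < (k : ℝ) →
          a k ≤ 1 / 2 * (M ^ 2 / c ^ 2) *
            (1 / ((k : ℝ) - ϑ⁻¹ * log (4 * D0 * c ^ 2 / (ϑ * M ^ 2)))) := by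
  obtain ⟨hϑ0, hϑ1⟩ := hϑ
  obtain ⟨u₀, hu₀⟩ : ∃ u₀, u₀ = 2 * c ^ 2 * D0 / M ^ 2 := ⟨_, rfl⟩
  have hu₀_pos : 0 < u₀ := by rw [hu₀]; positivity
  have hburn : ϑ⁻¹ * log (4 * D0 * c ^ 2 / (ϑ * M ^ 2)) = burnInTime ϑ u₀ := by
    rw [burnInTime, hu₀]; congr 2; field_simp; ring
  rw [hburn]
  refine ⟨fun k ↦ min ϑ (greedyBound ϑ u₀ k) / (2 * c), fun k ↦ ⟨?_, ?_⟩, fun a h₀ ha k hk ↦ ?_⟩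
  · exact div_pos (lt_min hϑ0 (greedyBound_pos hϑ0 hϑ1 hu₀_pos k)) (by positivity)
  · exact div_le_div_of_nonneg_right (min_le_left _ _) (by positivity)
  have hbound : a k ≤ M ^ 2 / (4 * c ^ 2) * greedyBound ϑ u₀ k := by
    refine le_mul_greedyBound hϑ1 (h₀.trans_eq ?_) (fun j ↦ (ha j).trans_eq ?_) k
    · rw [hu₀]; field_simp; norm_num
    · field_simp; ring
  have hrate : greedyBound ϑ u₀ k ≤ 2 / (k - burnInTime ϑ u₀) :=
    (le_div_iff₀ (sub_pos.2 hk)).2 (greedyBound_mul_sub_burnInTime_le_two hϑ0 hϑ1 hu₀_pos k)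
  calc a k ≤ M ^ 2 / (4 * c ^ 2) * (2 / (k - burnInTime ϑ u₀)) := hbound.trans (by gcongr)
    _ = 1 / 2 * (M ^ 2 / c ^ 2) * (1 / (k - burnInTime ϑ u₀)) := by ring

/-- Serial SGD with the constant-stepsize backoff protocol (parameters `c_r = 2c`,
`B = M²/(4c)`): there is a stepsize schedule `γ_k ≤ ϑ/(2c)` under which every
nonnegative sequence with `a₀ = D₀/2` satisfying
`a_{k+1} ≤ (1 − 2cγ_k)a_k + ½γ_k²M²` obeys the `1/k` bound
`a_k ≤ (log(2/β)/(4(1 − β)))·(M²/c²)·1/(k − ϑ⁻¹log(4D₀c²/(ϑM²)))`. -/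
theorem serial_sgd_backoff_rate
    (c M β ϑ D0 : ℝ) (hc : 0 < c) (hM : 0 < M)
    (hβ : β ∈ Set.Ioo (0 : ℝ) 1) (hϑ : ϑ ∈ Set.Ioo (0 : ℝ) 1)
    (hD0 : 0 < D0) (hD0M : ϑ * M ^ 2 ≤ 4 * D0 * c ^ 2) :
    ∃ γ : ℕ → ℝ, (∀ k, 0 < γ k ∧ γ k ≤ ϑ / (2 * c)) ∧
      ∀ a : ℕ → ℝ, (∀ k, 0 ≤ a k) → a 0 = D0 / 2 →
        (∀ k : ℕ, a (k + 1) ≤ (1 - 2 * c * γ k) * a k + 1 / 2 * (γ k) ^ 2 * M ^ 2) →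
        ∀ k : ℕ, ϑ⁻¹ * Real.log (4 * D0 * c ^ 2 / (ϑ * M ^ 2)) < (k : ℝ) →
          a k ≤ Real.log (2 / β) / (4 * (1 - β)) * (M ^ 2 / c ^ 2) *
            (1 / ((k : ℝ) - ϑ⁻¹ * Real.log (4 * D0 * c ^ 2 / (ϑ * M ^ 2)))) := by
  obtain ⟨γ, hγ, hrate⟩ := serial_sgd_backoff_rate_general c M ϑ D0 hc hM ⟨hϑ.1, hϑ.2.le⟩ hD0
  refine ⟨γ, hγ, fun a _ h₀ ha k hk ↦ (hrate a h₀.le ha k hk).trans ?_⟩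
  have := sub_pos.2 hk
  grw [half_le_log_two_div_div hβ]
end

section
/- Let Ω ≥ 1, τ > 0, Δ ∈ (0,1], and ρ ≥ 0 be real numbers, and define Q = Ω + 2τρ + 4Ωρτ + 2τ²Ω²Δ^{1/2}, C = (Ωτ·Δ^{1/2} + √(Ω²τ²Δ + Q))², and δ = 1/(1 + √(1 + Q/(Ω²τ²Δ))). Then C/(1 − δ) ≤ 2Ω·(1 + 6τρ + 6τ²Ω·Δ^{1/2}). -/
/-!
Put `a = Ωτ√Δ` and `b = √(a² + Q)`. Then `√(1 + Q/a²) = b/a` and `1 - δ = b/(a + b)`, so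
`C/(1 - δ) = (a + b)³/b`. Expanding `0 ≤ (b - a)³` bounds this by `2b² + 6a² = 2Q + 8a²`, and
`Δ ≤ √Δ` together with `τρ ≤ Ωτρ` absorbs every term into `2Ω(1 + 6τρ + 6τ²Ω√Δ)`.
-/

theorem add_pow_three_le_of_le {R : Type*} [CommRing R] [PartialOrder R] [IsOrderedRing R]
    {a b : R} (hab : a ≤ b) : (a + b) ^ 3 ≤ (2 * b ^ 2 + 6 * a ^ 2) * b := by
  have hcube : 0 ≤ (b - a) ^ 3 := pow_nonneg (sub_nonneg.2 hab) 3
  have hdiff : (2 * b ^ 2 + 6 * a ^ 2) * b - (a + b) ^ 3 = (b - a) ^ 3 := by ring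
  exact sub_nonneg.1 (hdiff ▸ hcube)

section Sqrt

variable {a Q : ℝ}

theorem sqrt_one_add_div_sq (ha : 0 < a) : √(1 + Q / a ^ 2) = √(a ^ 2 + Q) / a := by
  rw [one_add_div (pow_ne_zero 2 ha.ne'), Real.sqrt_div' _ (sq_nonneg a), Real.sqrt_sq ha.le]

theorem one_sub_one_div_one_add_sqrt (ha : 0 < a) :
    1 - 1 / (1 + √(1 + Q / a ^ 2)) = √(a ^ 2 + Q) / (a + √(a ^ 2 + Q)) := by
  rw [sqrt_one_add_div_sq ha]
  field_simp
  ring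

theorem add_sqrt_sq_div_one_sub_le (ha : 0 < a) (hQ : 0 ≤ Q) :
    (a + √(a ^ 2 + Q)) ^ 2 / (1 - 1 / (1 + √(1 + Q / a ^ 2))) ≤ 2 * Q + 8 * a ^ 2 := by
  rw [one_sub_one_div_one_add_sqrt ha]
  have hsq : √(a ^ 2 + Q) ^ 2 = a ^ 2 + Q := Real.sq_sqrt (by positivity)
  have hpos : 0 < √(a ^ 2 + Q) := by positivity
  have hle : a ≤ √(a ^ 2 + Q) := Real.le_sqrt_of_sq_le (le_add_of_nonneg_right hQ)
  set b := √(a ^ 2 + Q)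
  calc (a + b) ^ 2 / (b / (a + b))
      = (a + b) ^ 3 / b := by rw [div_div_eq_mul_div, ← pow_succ]
    _ ≤ 2 * b ^ 2 + 6 * a ^ 2 := (div_le_iff₀ hpos).2 (add_pow_three_le_of_le hle)
    _ = 2 * Q + 8 * a ^ 2 := by rw [hsq]; ring

end Sqrt

/-- Bound on `C/(1 − δ)` for the Hogwild! constants: with
`Q = Ω + 2τρ + 4Ωρτ + 2τ²Ω²√Δ`, `C = (Ωτ√Δ + √(Ω²τ²Δ + Q))²`, and
`δ = 1/(1 + √(1 + Q/(Ω²τ²Δ)))`, one has `C/(1 − δ) ≤ 2Ω(1 + 6τρ + 6τ²Ω√Δ)`. -/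
theorem hogwild_C_div_one_sub_delta_bound
    (Ω τ Δ ρ : ℝ) (hΩ : 1 ≤ Ω) (hτ : 0 < τ) (hΔ : Δ ∈ Set.Ioc (0 : ℝ) 1) (hρ : 0 ≤ ρ)
    (Q C δ : ℝ)
    (hQ : Q = Ω + 2 * τ * ρ + 4 * Ω * ρ * τ + 2 * τ ^ 2 * Ω ^ 2 * Real.sqrt Δ)
    (hC : C = (Ω * τ * Real.sqrt Δ + Real.sqrt (Ω ^ 2 * τ ^ 2 * Δ + Q)) ^ 2)
    (hδ : δ = 1 / (1 + Real.sqrt (1 + Q / (Ω ^ 2 * τ ^ 2 * Δ)))) :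
    C / (1 - δ) ≤ 2 * Ω * (1 + 6 * τ * ρ + 6 * τ ^ 2 * Ω * Real.sqrt Δ) := by
  obtain ⟨hΔ_pos, hΔ_le⟩ := hΔ
  have hΩ_pos : 0 < Ω := one_pos.trans_le hΩ
  have ha : 0 < Ω * τ * √Δ := mul_pos (mul_pos hΩ_pos hτ) (Real.sqrt_pos.2 hΔ_pos)
  have hQ_nonneg : 0 ≤ Q := by rw [hQ]; positivity
  have ha_sq : (Ω * τ * √Δ) ^ 2 = Ω ^ 2 * τ ^ 2 * Δ := by
    rw [mul_pow, mul_pow, Real.sq_sqrt hΔ_pos.le]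
  have hbound : C / (1 - δ) ≤ 2 * Q + 8 * (Ω ^ 2 * τ ^ 2 * Δ) := by
    simpa only [ha_sq, ← hC, ← hδ] using add_sqrt_sq_div_one_sub_le ha hQ_nonneg
  have hΔ_le_sqrt : Δ ≤ √Δ := Real.le_sqrt_of_sq_le (pow_le_of_le_one hΔ_pos.le hΔ_le two_ne_zero)
  have hΔ_term : Ω ^ 2 * τ ^ 2 * Δ ≤ Ω ^ 2 * τ ^ 2 * √Δ := by gcongr
  have hρ_term : τ * ρ ≤ Ω * (τ * ρ) := le_mul_of_one_le_left (by positivity) hΩ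
  calc C / (1 - δ)
      ≤ 2 * Q + 8 * (Ω ^ 2 * τ ^ 2 * Δ) := hbound
    _ ≤ 2 * Ω * (1 + 6 * τ * ρ + 6 * τ ^ 2 * Ω * √Δ) := by rw [hQ]; linarith
end
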